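/- arXiv:2006.15076 — 2 statements merged into one kernel-verified Lean document; each statement's English description precedes it below -/
import Mathlib

section
/- Let G be a G-metric on a nonempty set X, let X_1,…,X_m be nonempty subsets of X, and let T : ∪_{i=1}^m X_i → ∪_{i=1}^m X_i be a cyclical operator. Write D(x,y) = G(x,y,y) + G(y,x,x). Suppose T is a G-Mohseni cyclical operator, i.e. there exists α ∈ (0,1/2) such that D(Tx,Ty) ≤ α·(D(x,y) + D(Tx,Ty)) for all x ∈ X_i and y ∈ X_{i+1} (indices mod m). Then for every ε > 0 the set F_ε^G(T) of ε-fixed points of T is nonempty. -/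
open Filter Set

/-- A G-metric on a set `X`. -/
structure IsGMetric {X : Type*} (G : X → X → X → ℝ) : Prop where
  eq_iff : ∀ x y z, G x y z = 0 ↔ x = y ∧ y = z
  pos : ∀ x y, x ≠ y → 0 < G x x y
  mono : ∀ x y z, z ≠ y → G x x y ≤ G x y z
  symm_swap : ∀ x y z, G x y z = G x z y
  symm_cycle : ∀ x y z, G x y z = G y z x
  rect : ∀ x y z a, G x y z ≤ G x a a + G a y z

/-- `D(x,y) = G(x,y,y) + G(y,x,x)`. -/
def gD {X : Type*} (G : X → X → X → ℝ) (x y : X) : ℝ :=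
  G x y y + G y x x

/-- `T` is a cyclical operator with respect to the family of sets `A`. -/
def IsCyclical {X : Type*} {m : ℕ} [NeZero m] (A : Fin m → Set X) (T : X → X) : Prop :=
  ∀ i : Fin m, Set.MapsTo T (A i) (A (i + 1))

theorem IsCyclical.mapsTo_iUnion {X : Type*} {m : ℕ} [NeZero m] {A : Fin m → Set X} {T : X → X}
    (hT : IsCyclical A T) : MapsTo T (⋃ i, A i) (⋃ i, A i) :=
  Set.mapsTo_iUnion.2 fun i _ hx => mem_iUnion_of_mem (i + 1) (hT i hx)

section OrderedField

variable {K : Type*} [Field K] [LinearOrder K] [IsStrictOrderedRing K] {a b α : K}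

theorem le_div_one_sub_mul_of_le_mul_add (hα : α < 1) (h : b ≤ α * (a + b)) :
    b ≤ α / (1 - α) * a := by
  rw [div_mul_eq_mul_div, le_div_iff₀ (sub_pos.2 hα)]
  linarith

theorem div_one_sub_lt_one_of_lt_half (hα : α < 1 / 2) : α / (1 - α) < 1 := by
  rw [div_lt_one (by linarith)]
  linarith

end OrderedField

theorem exists_lt_of_succ_le_mul {u : ℕ → ℝ} {c ε : ℝ} (hc : c < 1) (hε : 0 < ε)
    (hu : ∀ n, u (n + 1) ≤ c * u n) : ∃ n, u n < ε := by
  by_contra! hle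
  have hu_pos (n : ℕ) : 0 < u n := hε.trans_le (hle n)
  have hc_pos : 0 < c := pos_of_mul_pos_left ((hu_pos 1).trans_le (hu 0)) (hu_pos 0).le
  have hlim : Tendsto (fun n : ℕ => c ^ n * u 0) atTop (nhds 0) := by
    simpa only [zero_mul] using
      (tendsto_pow_atTop_nhds_zero_of_lt_one hc_pos.le hc).mul_const (u 0)
  obtain ⟨n, hn⟩ := (hlim.eventually_lt_const hε).exists
  have hgeom : u n ≤ c ^ n * u 0 := le_geom hc_pos.le n fun k _ => hu k
  exact ((hle n).trans hgeom).not_gt hn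

-- The displacement `d x (T x)` shrinks by the factor `α / (1 - α) < 1` at each step of an orbit.
theorem stmt_6_general {X : Type*} (d : X → X → ℝ) {S : Set X} (hS : S.Nonempty)
    {T : X → X} (hT : MapsTo T S S) {α : ℝ} (hα : α < 1 / 2)
    (hcontr : ∀ x ∈ S, d (T x) (T (T x)) ≤ α * (d x (T x) + d (T x) (T (T x)))) :
    ∀ ε > 0, {x ∈ S | d x (T x) < ε}.Nonempty := by
  intro ε hε
  obtain ⟨x, hx⟩ := hS
  have horbit (n : ℕ) : T^[n] x ∈ S := hT.iterate n hx
  have hstep (n : ℕ) : d (T^[n + 1] x) (T (T^[n + 1] x)) ≤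
      α / (1 - α) * d (T^[n] x) (T (T^[n] x)) := by
    rw [Function.iterate_succ_apply']
    exact le_div_one_sub_mul_of_le_mul_add (by linarith) (hcontr _ (horbit n))
  obtain ⟨n, hn⟩ := exists_lt_of_succ_le_mul (u := fun n => d (T^[n] x) (T (T^[n] x)))
    (div_one_sub_lt_one_of_lt_half hα) hε hstep
  exact ⟨T^[n] x, horbit n, hn⟩

/-- A G-Mohseni cyclical operator has, for every `ε > 0`, a nonempty set of
`ε`-fixed points. -/
theorem stmt_6 {X : Type*} [Nonempty X] {m : ℕ} [NeZero m]
    (G : X → X → X → ℝ) (hG : IsGMetric G)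
    (A : Fin m → Set X) (hA : ∀ i, (A i).Nonempty)
    (T : X → X) (hT : IsCyclical A T)
    (α : ℝ) (hα : α ∈ Set.Ioo (0 : ℝ) (1/2))
    (hcontr : ∀ i : Fin m, ∀ x ∈ A i, ∀ y ∈ A (i + 1),
      gD G (T x) (T y) ≤ α * (gD G x y + gD G (T x) (T y))) :
    ∀ ε > 0, {x ∈ ⋃ i, A i | gD G x (T x) < ε}.Nonempty := by
  refine stmt_6_general (gD G) (nonempty_iUnion.2 ⟨0, hA 0⟩) hT.mapsTo_iUnion hα.2 fun x hx => ?_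
  obtain ⟨i, hi⟩ := mem_iUnion.1 hx
  exact hcontr i x hi (T x) (hT i hi)
end

section
/- Let G be a G-metric on a nonempty set X, let X_1,…,X_m be nonempty subsets of X, and let T : ∪_{i=1}^m X_i → ∪_{i=1}^m X_i be a cyclical operator. Write D(x,y) = G(x,y,y) + G(y,x,x). Suppose T is a G-Mohseni-semi cyclical operator, i.e. there exists α ∈ (0,1/2) such that D(Tx,Ty) ≤ α·(D(x,y) + D(x,Tx)) for all x ∈ X_i and y ∈ X_{i+1} (indices mod m). Then for every ε > 0 and all x, y ∈ F_ε^G(T), one has D(x,y) ≤ ε(2+α)/(1−α). -/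
open Filter Set

/-!
The function `D` is a pseudometric, so everything happens in a pseudometric space. Since `2α < 1`,
consecutive distances along an orbit decay geometrically, and the orbit converges to a point `p` of
the completion of `X`. Given `z` in some `A i`, the orbit visits `A (i - 1)` infinitely often, and
at each visit the contraction condition can be compared with `z`; in the limit this gives
`(1 - α) * dist p z ≤ dist z (T z)`. The triangle inequality through `p` concludes.
-/

section GMetric

variable {X : Type*} {G : X → X → X → ℝ}

theorem gD_comm (G : X → X → X → ℝ) (x y : X) : gD G x y = gD G y x :=
  add_comm _ _

theorem IsGMetric.gD_self (hG : IsGMetric G) (x : X) : gD G x x = 0 := by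
  simp only [gD, (hG.eq_iff x x x).2 ⟨rfl, rfl⟩, add_zero]

theorem IsGMetric.gD_triangle (hG : IsGMetric G) (x y z : X) :
    gD G x z ≤ gD G x y + gD G y z := by
  have hxz := hG.rect x z z y
  have hzx := hG.rect z x x y
  unfold gD
  linarith

/-- The pseudometric space whose distance is the function `D` of a G-metric; it makes
completions and Cauchy sequences available. -/
abbrev IsGMetric.pseudoMetricSpace (hG : IsGMetric G) : PseudoMetricSpace X where
  dist := gD G
  dist_self := hG.gD_self
  dist_comm := gD_comm G
  dist_triangle := hG.gD_triangle

end GMetric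

namespace IsCyclical

variable {X : Type*} {m : ℕ} [NeZero m] {A : Fin m → Set X} {T : X → X}

open scoped Fin.CommRing in
theorem iterate_mem (hT : IsCyclical A T) {i : Fin m} {x : X} (hx : x ∈ A i) (n : ℕ) :
    T^[n] x ∈ A (i + n) := by
  induction n with
  | zero => simpa using hx
  | succ n ih =>
    rw [Function.iterate_succ_apply', Nat.cast_succ, ← add_assoc]
    exact hT _ ih

open scoped Fin.CommRing in
theorem frequently_iterate_mem (hT : IsCyclical A T) {x : X} (hx : x ∈ ⋃ i, A i) (j : Fin m) :
    ∃ᶠ n in atTop, T^[n] x ∈ A j := by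
  obtain ⟨i, hi⟩ := mem_iUnion.1 hx
  refine frequently_atTop.2 fun N ↦ ⟨N + (j - i - N : Fin m).val, Nat.le_add_right _ _, ?_⟩
  have index_eq : i + ((N + (j - i - N : Fin m).val : ℕ) : Fin m) = j := by
    rw [Nat.cast_add, Fin.cast_val_eq_self]
    ring
  simpa only [index_eq] using hT.iterate_mem hi (N + (j - i - N : Fin m).val)

end IsCyclical

/-- The contraction condition in the notion of a Mohseni-semi cyclical operator with constant `α`,
for the distance of a pseudometric space; cyclicity of `T` and the range of `α` are kept apart. -/
def IsMohseniSemi {X : Type*} [PseudoMetricSpace X] {m : ℕ} [NeZero m] (A : Fin m → Set X)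
    (T : X → X) (α : ℝ) : Prop :=
  ∀ i, ∀ x ∈ A i, ∀ y ∈ A (i + 1), dist (T x) (T y) ≤ α * (dist x y + dist x (T x))

namespace IsMohseniSemi

open UniformSpace Topology

variable {X : Type*} [PseudoMetricSpace X] {m : ℕ} [NeZero m] {A : Fin m → Set X} {T : X → X}
  {α : ℝ}

theorem one_sub_mul_dist_le (h : IsMohseniSemi A T α) {i : Fin m} {x y : X} (hx : x ∈ A i)
    (hy : y ∈ A (i + 1)) :
    (1 - α) * dist x y ≤ dist y (T y) + (1 + α) * dist x (T x) := by
  have hcontr := h i x hx y hy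
  have htri := dist_triangle4_right x y (T x) (T y)
  linarith

theorem dist_map_map_map_le (h : IsMohseniSemi A T α) (hT : IsCyclical A T) {x : X}
    (hx : x ∈ ⋃ i, A i) : dist (T x) (T (T x)) ≤ 2 * α * dist x (T x) := by
  obtain ⟨i, hi⟩ := mem_iUnion.1 hx
  have hcontr := h i x hi (T x) (hT i hi)
  linarith

theorem dist_iterate_succ_le (h : IsMohseniSemi A T α) (hT : IsCyclical A T) (hα₀ : 0 ≤ α)
    {x : X} (hx : x ∈ ⋃ i, A i) (n : ℕ) :
    dist (T^[n] x) (T^[n + 1] x) ≤ dist x (T x) * (2 * α) ^ n := by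
  obtain ⟨i, hi⟩ := mem_iUnion.1 hx
  induction n with
  | zero => simp
  | succ n ih =>
    have hmem : T^[n] x ∈ ⋃ i, A i := mem_iUnion_of_mem _ (hT.iterate_mem hi n)
    simp only [Function.iterate_succ_apply'] at ih ⊢
    calc dist (T (T^[n] x)) (T (T (T^[n] x)))
        ≤ 2 * α * dist (T^[n] x) (T (T^[n] x)) := h.dist_map_map_map_le hT hmem
      _ ≤ 2 * α * (dist x (T x) * (2 * α) ^ n) := by gcongr
      _ = dist x (T x) * (2 * α) ^ (n + 1) := by ring

theorem cauchySeq_iterate (h : IsMohseniSemi A T α) (hT : IsCyclical A T) (hα₀ : 0 ≤ α)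
    (hα : α < 1 / 2) {x : X} (hx : x ∈ ⋃ i, A i) : CauchySeq fun n ↦ T^[n] x :=
  cauchySeq_of_le_geometric (2 * α) _ (by linarith) (h.dist_iterate_succ_le hT hα₀ hx)

theorem one_sub_mul_dist_limit_le (h : IsMohseniSemi A T α) (hT : IsCyclical A T) {x z : X}
    (hx : x ∈ ⋃ i, A i) (hz : z ∈ ⋃ i, A i) {p : Completion X}
    (hp : Tendsto (fun n ↦ (T^[n] x : Completion X)) atTop (𝓝 p)) :
    (1 - α) * dist p z ≤ dist z (T z) := by
  obtain ⟨j, hj⟩ := mem_iUnion.1 hz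
  have hdist : Tendsto (fun n ↦ dist (T^[n] x) z) atTop (𝓝 (dist p z)) := by
    simpa only [Completion.dist_eq] using hp.dist (tendsto_const_nhds (x := (z : Completion X)))
  have hstep : Tendsto (fun n ↦ dist (T^[n] x) (T^[n + 1] x)) atTop (𝓝 0) := by
    simpa only [Function.comp_apply, Completion.dist_eq, dist_self] using
      hp.dist (hp.comp (tendsto_add_atTop_nat 1))
  have hfreq : ∃ᶠ n in atTop, (1 - α) * dist (T^[n] x) z ≤
      dist z (T z) + (1 + α) * dist (T^[n] x) (T^[n + 1] x) := by
    refine (hT.frequently_iterate_mem hx (j - 1)).mono fun n hn ↦ ?_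
    rw [Function.iterate_succ_apply']
    exact h.one_sub_mul_dist_le hn (by rwa [sub_add_cancel])
  simpa using le_of_tendsto_of_tendsto_of_frequently (hdist.const_mul (1 - α))
    ((hstep.const_mul (1 + α)).const_add (dist z (T z))) hfreq

end IsMohseniSemi

theorem stmt_11_general {X : Type*} [PseudoMetricSpace X] {m : ℕ} [NeZero m] {A : Fin m → Set X}
    {T : X → X} {α : ℝ} (hT : IsCyclical A T) (hα₀ : 0 ≤ α) (hα : α < 1 / 2)
    (h : IsMohseniSemi A T α) {x y : X} (hx : x ∈ ⋃ i, A i) (hy : y ∈ ⋃ i, A i) :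
    dist x y ≤ (dist x (T x) + dist y (T y)) / (1 - α) := by
  obtain ⟨p, hp⟩ := cauchySeq_tendsto_of_complete <|
    (UniformSpace.Completion.uniformContinuous_coe X).comp_cauchySeq
      (h.cauchySeq_iterate hT hα₀ hα hx)
  have hpx := h.one_sub_mul_dist_limit_le hT hx hx hp
  have hpy := h.one_sub_mul_dist_limit_le hT hx hy hp
  rw [le_div_iff₀' (by linarith)]
  calc (1 - α) * dist x y
      = (1 - α) * dist (x : UniformSpace.Completion X) y := by rw [UniformSpace.Completion.dist_eq]
    _ ≤ (1 - α) * (dist p x + dist p y) :=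
        mul_le_mul_of_nonneg_left (dist_triangle_left _ _ _) (by linarith)
    _ ≤ dist x (T x) + dist y (T y) := by linarith

/-- For a G-Mohseni-semi cyclical operator, any two `ε`-fixed points `x, y` satisfy
`D(x,y) ≤ ε(2+α)/(1−α)`. -/
theorem stmt_11 {X : Type*} [Nonempty X] {m : ℕ} [NeZero m]
    (G : X → X → X → ℝ) (hG : IsGMetric G)
    (A : Fin m → Set X) (hA : ∀ i, (A i).Nonempty)
    (T : X → X) (hT : IsCyclical A T)
    (α : ℝ) (hα : α ∈ Set.Ioo (0 : ℝ) (1/2))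
    (hcontr : ∀ i : Fin m, ∀ x ∈ A i, ∀ y ∈ A (i + 1),
      gD G (T x) (T y) ≤ α * (gD G x y + gD G x (T x))) :
    ∀ ε > 0, ∀ x ∈ {x ∈ ⋃ i, A i | gD G x (T x) < ε},
      ∀ y ∈ {x ∈ ⋃ i, A i | gD G x (T x) < ε},
      gD G x y ≤ ε * (2 + α) / (1 - α) := by
  let _ := hG.pseudoMetricSpace
  rintro ε hε x ⟨hx, hxε⟩ y ⟨hy, hyε⟩
  have hα₁ : 0 ≤ 1 - α := by linarith [hα.2]
  calc gD G x y
      ≤ (gD G x (T x) + gD G y (T y)) / (1 - α) := stmt_11_general hT hα.1.le hα.2 hcontr hx hy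
    _ ≤ ε * (2 + α) / (1 - α) := by gcongr; linarith [mul_pos hε hα.1]
end
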